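/- arXiv:1811.03843 — 2 statements merged into one kernel-verified Lean document; each statement's English description precedes it below -/
import Mathlib

section
/- The vectors C^k A^l (k ≥ 0, l ≥ 1), B^l C^k (k ≥ 0, l ≥ 1), and C^k (k ≥ 0) form a basis of R as an F-vector space; that is, this family is linearly independent and spans R. -/
noncomputable section

open FreeAlgebra

/-- The defining relation `A*B = m • (B*A) + b·1` on the free algebra `F⟨A,B⟩`
(the free unital associative algebra on two generators `A = ι F 0`, `B = ι F 1`). -/
def twistRel (F : Type*) [Field F] (m b : F) :
    FreeAlgebra F (Fin 2) → FreeAlgebra F (Fin 2) → Prop :=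
  fun p q => p = ι F 0 * ι F 1 ∧
    q = m • (ι F 1 * ι F 0) + algebraMap F (FreeAlgebra F (Fin 2)) b

/-- `R = F⟨A,B⟩ / (AB − m·BA − b·1)`. -/
abbrev TwistAlg (F : Type*) [Field F] (m b : F) := RingQuot (twistRel F m b)

/-- The image of the generator `A` in `R`. -/
def genA (F : Type*) [Field F] (m b : F) : TwistAlg F m b :=
  RingQuot.mkAlgHom F (twistRel F m b) (ι F 0)

/-- The image of the generator `B` in `R`. -/
def genB (F : Type*) [Field F] (m b : F) : TwistAlg F m b :=
  RingQuot.mkAlgHom F (twistRel F m b) (ι F 1)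

/-- `C := A*B − B*A` in `R`. -/
def genC (F : Type*) [Field F] (m b : F) : TwistAlg F m b :=
  genA F m b * genB F m b - genB F m b * genA F m b
/-- The family consisting of the vectors `C^k * A^l` (`k ≥ 0`, `l ≥ 1`),
`B^l * C^k` (`k ≥ 0`, `l ≥ 1`) and `C^k` (`k ≥ 0`). -/
def basisFam (F : Type*) [Field F] (m b : F) :
    (ℕ × ℕ) ⊕ (ℕ × ℕ) ⊕ ℕ → TwistAlg F m b
  | .inl (k, l) => genC F m b ^ k * genA F m b ^ (l + 1)
  | .inr (.inl (k, l)) => genB F m b ^ (l + 1) * genC F m b ^ k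
  | .inr (.inr k) => genC F m b ^ k


section Span

variable {F : Type*} [Field F] {R : Type*} [Ring R] [Algebra F R]

theorem tw_AC (m b : F) (A B C : R) (h : A * B = m • (B * A) + algebraMap F R b)
    (hC : C = A * B - B * A) : A * C = m • (C * A) := by
  have h1 : C = (m - 1) • (B * A) + algebraMap F R b := by
    rw [hC, h, sub_smul, one_smul]; abel
  have h2 : m • C = (m - 1) • (A * B) + algebraMap F R b := by
    rw [hC, h]
    simp only [Algebra.algebraMap_eq_smul_one]
    module
  rw [← smul_mul_assoc, h2, h1, mul_add, add_mul, mul_smul_comm, smul_mul_assoc, mul_assoc,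
    Algebra.commutes]

theorem tw_CB (m b : F) (A B C : R) (h : A * B = m • (B * A) + algebraMap F R b)
    (hC : C = A * B - B * A) : C * B = m • (B * C) := by
  have h1 : C = (m - 1) • (B * A) + algebraMap F R b := by
    rw [hC, h, sub_smul, one_smul]; abel
  have h2 : m • C = (m - 1) • (A * B) + algebraMap F R b := by
    rw [hC, h]
    simp only [Algebra.algebraMap_eq_smul_one]
    module
  rw [← mul_smul_comm, h2, h1, mul_add, add_mul, mul_smul_comm, smul_mul_assoc, mul_assoc,
    Algebra.commutes]

theorem tw_qpow (m : F) (A C : R) (h : A * C = m • (C * A)) (k : ℕ) :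
    A * C ^ k = m ^ k • (C ^ k * A) := by
  induction k with
  | zero => simp
  | succ k ih =>
    rw [pow_succ, ← mul_assoc, ih, smul_mul_assoc, mul_assoc, h, mul_smul_comm, smul_smul,
      ← mul_assoc, pow_succ]

theorem tw_span (m b : F) (hm0 : m ≠ 0) (hm1 : m ≠ 1) (A B C : R)
    (h : A * B = m • (B * A) + algebraMap F R b)
    (hC : C = A * B - B * A) (W : Submodule F R)
    (hA : ∀ k l, C ^ k * A ^ l ∈ W) (hB : ∀ l k, B ^ l * C ^ k ∈ W)
    (hW : ∀ p : R → Prop, (∀ k l, p (C ^ k * A ^ l)) → (∀ l k, p (B ^ l * C ^ k)) →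
      (∀ x y, p x → p y → p (x + y)) → (∀ (c : F) x, p x → p (c • x)) → ∀ x ∈ W, p x) :
    (∀ x ∈ W, A * x ∈ W) ∧ (∀ x ∈ W, B * x ∈ W) := by
  have hm : m - 1 ≠ 0 := sub_ne_zero.2 hm1
  have hAC := tw_AC m b A B C h hC
  have hCB := tw_CB m b A B C h hC
  have hBA : B * A = (m - 1)⁻¹ • C - ((m - 1)⁻¹ * b) • (1 : R) := by
    have : C = (m - 1) • (B * A) + b • (1 : R) := by
      rw [hC, h, Algebra.algebraMap_eq_smul_one]; module
    rw [this, smul_add, smul_smul, smul_smul, inv_mul_cancel₀ hm, one_smul]; abel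
  have hAB : A * B = C + (m - 1)⁻¹ • C - ((m - 1)⁻¹ * b) • (1 : R) := by
    rw [add_sub_assoc, ← hBA, hC]; abel
  have hACk := tw_qpow m A C hAC
  have hCBl := tw_qpow m C B hCB
  have hBC : B * C = m⁻¹ • (C * B) := by rw [hCB, smul_smul, inv_mul_cancel₀ hm0, one_smul]
  have hBCk := tw_qpow m⁻¹ B C hBC
  constructor
  · apply hW
    · intro k l
      rw [← mul_assoc, hACk, smul_mul_assoc, mul_assoc, ← pow_succ']
      exact W.smul_mem _ (hA _ _)
    · intro l k
      cases l with
      | zero =>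
        rw [pow_zero, one_mul, hACk]
        have := hA k 1
        rw [pow_one] at this
        exact W.smul_mem _ this
      | succ l =>
        have e : C * (B ^ l * C ^ k) ∈ W := by
          rw [← mul_assoc, hCBl, smul_mul_assoc, mul_assoc, ← pow_succ']
          exact W.smul_mem _ (hB _ _)
        rw [pow_succ', mul_assoc, ← mul_assoc, hAB, sub_mul, add_mul, smul_mul_assoc,
          smul_mul_assoc, one_mul]
        exact W.sub_mem (W.add_mem e (W.smul_mem _ e)) (W.smul_mem _ (hB _ _))
    · intro x y hx hy
      rw [mul_add]; exact W.add_mem hx hy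
    · intro c x hx
      rw [mul_smul_comm]; exact W.smul_mem _ hx
  · apply hW
    · intro k l
      cases l with
      | zero =>
        have := hB 1 k
        simpa using this
      | succ l =>
        rw [← mul_assoc, hBCk, smul_mul_assoc, pow_succ', mul_assoc, ← mul_assoc B, hBA, sub_mul,
          mul_sub, smul_mul_assoc, smul_mul_assoc, mul_smul_comm, mul_smul_comm, one_mul,
          ← mul_assoc, ← pow_succ]
        exact W.smul_mem _ (W.sub_mem (W.smul_mem _ (hA _ _)) (W.smul_mem _ (hA _ _)))
    · intro l k
      rw [← mul_assoc, ← pow_succ']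
      exact hB _ _
    · intro x y hx hy
      rw [mul_add]; exact W.add_mem hx hy
    · intro c x hx
      rw [mul_smul_comm]; exact W.smul_mem _ hx

end Span

theorem tw_rel (F : Type*) [Field F] (m b : F) :
    genA F m b * genB F m b = m • (genB F m b * genA F m b) + algebraMap F _ b := by
  have := RingQuot.mkAlgHom_rel F (s := twistRel F m b)
    (x := ι F 0 * ι F 1)
    (y := m • (ι F 1 * ι F 0) + algebraMap F (FreeAlgebra F (Fin 2)) b) ⟨rfl, rfl⟩
  rw [map_mul, map_add, map_smul, map_mul, AlgHom.commutes] at this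
  exact this

theorem tw_top (F : Type*) [Field F] (m b : F) (W : Submodule F (TwistAlg F m b))
    (h1 : (1 : TwistAlg F m b) ∈ W)
    (hA : ∀ x ∈ W, genA F m b * x ∈ W) (hB : ∀ x ∈ W, genB F m b * x ∈ W) : W = ⊤ := by
  rw [eq_top_iff]
  intro x _
  obtain ⟨y, rfl⟩ := RingQuot.mkAlgHom_surjective F (twistRel F m b) x
  suffices H : ∀ w ∈ W, RingQuot.mkAlgHom F (twistRel F m b) y * w ∈ W by
    simpa using H 1 h1
  induction y using FreeAlgebra.induction with
  | grade0 r =>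
    intro w hw
    rw [AlgHom.commutes, ← Algebra.smul_def]
    exact W.smul_mem _ hw
  | grade1 i =>
    intro w hw
    fin_cases i
    · exact hA w hw
    · exact hB w hw
  | mul p q hp hq =>
    intro w hw
    rw [map_mul, mul_assoc]
    exact hp trivial _ (hq trivial _ hw)
  | add p q hp hq =>
    intro w hw
    rw [map_add, add_mul]
    exact W.add_mem (hp trivial _ hw) (hq trivial _ hw)

section Rep
open Polynomial

variable {F : Type*} [Field F]

/-- substitution of `c X` for `X` -/
def twS (c : F) : F[X] →ₗ[F] F[X] := (Polynomial.aeval (C c * X)).toLinearMap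

theorem twS_mul (c : F) (p q : F[X]) : twS c (p * q) = twS c p * twS c q := by simp [twS]

theorem twS_twS (c d : F) (p : F[X]) (h : c * d = 1) : twS c (twS d p) = p := by
  have : ((Polynomial.aeval (C c * X)).comp (Polynomial.aeval (C d * X)) : F[X] →ₐ[F] F[X])
      = AlgHom.id F F[X] := by
    apply Polynomial.algHom_ext
    simp only [AlgHom.comp_apply, aeval_X, map_mul, aeval_C, AlgHom.id_apply]
    rw [Polynomial.algebraMap_eq, ← mul_assoc, ← C_mul, mul_comm d, h, C_1, one_mul]
  exact DFunLike.congr_fun this p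

def twf (m b : F) : F[X] := C (m - 1)⁻¹ * (X - C b)

theorem twf_ne (m b : F) (hm1 : m ≠ 1) : twf m b ≠ 0 :=
  mul_ne_zero (by simpa using sub_ne_zero.2 hm1) (X_sub_C_ne_zero b)

def twPhi (m b : F) : F[X] →ₗ[F] F[X] := LinearMap.mulLeft F (twf m b) ∘ₗ twS m⁻¹

theorem twPhi_apply (m b : F) (p : F[X]) : twPhi m b p = twf m b * twS m⁻¹ p := rfl

theorem twPhi_inj (m b : F) (hm0 : m ≠ 0) (hm1 : m ≠ 1) : Function.Injective (twPhi m b) := by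
  intro p q h
  rw [twPhi_apply, twPhi_apply] at h
  have h2 := mul_left_cancel₀ (twf_ne m b hm1) h
  rw [← twS_twS m m⁻¹ p (mul_inv_cancel₀ hm0), h2, twS_twS m m⁻¹ q (mul_inv_cancel₀ hm0)]

def twA (m : F) : Module.End F (ℤ →₀ F[X]) :=
  Finsupp.lsum F (fun n => Finsupp.lsingle (n + 1) ∘ₗ twS m)

def twB (m b : F) : Module.End F (ℤ →₀ F[X]) :=
  Finsupp.lsum F (fun n => Finsupp.lsingle (n - 1) ∘ₗ twPhi m b)

theorem twA_single (m : F) (n : ℤ) (p : F[X]) :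
    twA m (Finsupp.single n p) = Finsupp.single (n + 1) (twS m p) := by
  simp [twA]

theorem twB_single (m b : F) (n : ℤ) (p : F[X]) :
    twB m b (Finsupp.single n p) = Finsupp.single (n - 1) (twPhi m b p) := by
  simp [twB]

theorem twS_twf (m b : F) (hm1 : m ≠ 1) : twS m (twf m b) = m • twf m b + C b := by
  have hm : m - 1 ≠ 0 := sub_ne_zero.2 hm1
  have e : C (m - 1)⁻¹ * (C m - 1) = (1 : F[X]) := by
    rw [← C_1, ← C_sub, ← C_mul, inv_mul_cancel₀ hm]
  simp only [twS, twf, AlgHom.toLinearMap_apply, map_mul, map_sub, aeval_X, aeval_C,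
    Polynomial.algebraMap_eq, Polynomial.smul_eq_C_mul]
  linear_combination (C b) * e

theorem twAB_rel (m b : F) (hm0 : m ≠ 0) (hm1 : m ≠ 1) :
    twA m * twB m b = m • (twB m b * twA m) + algebraMap F _ b := by
  apply Finsupp.lhom_ext
  intro n p
  simp only [Module.End.mul_apply, LinearMap.add_apply, LinearMap.smul_apply, twA_single,
    twB_single, twPhi_apply, Module.algebraMap_end_apply, twS_mul, sub_add_cancel,
    add_sub_cancel_right, twS_twS m m⁻¹ p (mul_inv_cancel₀ hm0),
    twS_twS m⁻¹ m p (inv_mul_cancel₀ hm0), twS_twf m b hm1, Finsupp.smul_single,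
    ← Finsupp.single_add]
  congr 1
  simp only [Polynomial.smul_eq_C_mul]
  ring

theorem twC_single (m b : F) (hm0 : m ≠ 0) (hm1 : m ≠ 1) (n : ℤ) (p : F[X]) :
    (twA m * twB m b - twB m b * twA m) (Finsupp.single n p) = Finsupp.single n (X * p) := by
  have hm : m - 1 ≠ 0 := sub_ne_zero.2 hm1
  have e : C (m - 1)⁻¹ * (C m - 1) = (1 : F[X]) := by
    rw [← C_1, ← C_sub, ← C_mul, inv_mul_cancel₀ hm]
  simp only [Module.End.mul_apply, LinearMap.sub_apply, twA_single,
    twB_single, twPhi_apply, twS_mul, sub_add_cancel,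
    add_sub_cancel_right, twS_twS m m⁻¹ p (mul_inv_cancel₀ hm0),
    twS_twS m⁻¹ m p (inv_mul_cancel₀ hm0), twS_twf m b hm1,
    ← Finsupp.single_sub]
  congr 1
  simp only [Polynomial.smul_eq_C_mul, twf]
  linear_combination ((X - C b) * p) * e

theorem twC_pow (m b : F) (hm0 : m ≠ 0) (hm1 : m ≠ 1) (k : ℕ) (n : ℤ) (p : F[X]) :
    ((twA m * twB m b - twB m b * twA m) ^ k) (Finsupp.single n p)
      = Finsupp.single n (X ^ k * p) := by
  induction k with
  | zero => simp
  | succ k ih => rw [pow_succ', Module.End.mul_apply, ih, twC_single m b hm0 hm1, pow_succ',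
      mul_assoc]

theorem twA_pow (m : F) (l : ℕ) :
    ((twA m) ^ l) (Finsupp.single 0 1) = Finsupp.single (l : ℤ) (1 : F[X]) := by
  induction l with
  | zero => simp
  | succ l ih => rw [pow_succ', Module.End.mul_apply, ih, twA_single]; simp [twS]

theorem twB_pow (m b : F) (l : ℕ) (p : F[X]) :
    ((twB m b) ^ l) (Finsupp.single 0 p) = Finsupp.single (-(l : ℤ)) ((twPhi m b ^ l) p) := by
  induction l with
  | zero => simp
  | succ l ih =>
    rw [pow_succ', Module.End.mul_apply, ih, twB_single, pow_succ', Module.End.mul_apply]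
    congr 1
    push_cast; ring

def twRep (m b : F) (hm0 : m ≠ 0) (hm1 : m ≠ 1) :
    TwistAlg F m b →ₐ[F] Module.End F (ℤ →₀ F[X]) :=
  RingQuot.liftAlgHom F ⟨FreeAlgebra.lift F ![twA m, twB m b], by
    rintro x y ⟨rfl, rfl⟩
    simpa using twAB_rel m b hm0 hm1⟩

theorem twRep_A (m b : F) (hm0 : m ≠ 0) (hm1 : m ≠ 1) :
    twRep m b hm0 hm1 (genA F m b) = twA m := by
  simp [twRep, genA]

theorem twRep_B (m b : F) (hm0 : m ≠ 0) (hm1 : m ≠ 1) :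
    twRep m b hm0 hm1 (genB F m b) = twB m b := by
  simp [twRep, genB]

theorem twRep_C (m b : F) (hm0 : m ≠ 0) (hm1 : m ≠ 1) :
    twRep m b hm0 hm1 (genC F m b) = twA m * twB m b - twB m b * twA m := by
  rw [genC, map_sub, map_mul, map_mul, twRep_A, twRep_B]

def twIdx : (ℕ × ℕ) ⊕ (ℕ × ℕ) ⊕ ℕ → (Σ _ : ℤ, ℕ)
  | .inl (k, l) => ⟨((l + 1 : ℕ) : ℤ), k⟩
  | .inr (.inl (k, l)) => ⟨-((l + 1 : ℕ) : ℤ), k⟩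
  | .inr (.inr k) => ⟨0, k⟩

theorem twIdx_inj : Function.Injective twIdx := by
  rintro (⟨k, l⟩ | ⟨k, l⟩ | k) (⟨k', l'⟩ | ⟨k', l'⟩ | k') h <;>
    simp only [twIdx, Sigma.mk.injEq, heq_eq_eq] at h <;> obtain ⟨h1, h2⟩ := h <;>
    first
    | (exfalso; omega)
    | (have h3 : l = l' := by omega
       rw [h2, h3])
    | rw [h2]

theorem tw_linInd (m b : F) (hm0 : m ≠ 0) (hm1 : m ≠ 1) :
    LinearIndependent F (fun i : (Σ _ : ℤ, ℕ) =>
      (Finsupp.single i.1 ((twPhi m b ^ (-i.1).toNat) (X ^ i.2)) : ℤ →₀ F[X])) := by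
  apply Finsupp.linearIndependent_single
    (f := fun (n : ℤ) (k : ℕ) => (twPhi m b ^ (-n).toNat) (X ^ k : F[X]))
  intro n
  have h0 : LinearIndependent F (fun k : ℕ => (X ^ k : F[X])) := by
    have := (Polynomial.basisMonomials F).linearIndependent
    convert this using 2 with k
    simp [Polynomial.X_pow_eq_monomial]
  refine h0.map' (twPhi m b ^ (-n).toNat) (LinearMap.ker_eq_bot.2 ?_)
  rw [Module.End.coe_pow]
  exact (twPhi_inj m b hm0 hm1).iterate _

end Rep

theorem stmt1 (F : Type*) [Field F] (m b : F) (hm0 : m ≠ 0) (hm1 : m ≠ 1) :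
    LinearIndependent F (basisFam F m b) ∧
    Submodule.span F (Set.range (basisFam F m b)) = ⊤ := by
  constructor
  · let ev : TwistAlg F m b →ₗ[F] (ℤ →₀ Polynomial F) :=
      (LinearMap.applyₗ (Finsupp.single (0 : ℤ) (1 : Polynomial F))) ∘ₗ
        (twRep m b hm0 hm1).toLinearMap
    apply LinearIndependent.of_comp ev
    have := (tw_linInd m b hm0 hm1).comp twIdx twIdx_inj
    convert this using 1
    funext i
    have hev : ∀ x, ev x = twRep m b hm0 hm1 x (Finsupp.single (0 : ℤ) (1 : Polynomial F)) :=
      fun _ => rfl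
    rcases i with ⟨k, l⟩ | ⟨k, l⟩ | k
    · simp only [Function.comp, basisFam, twIdx, hev, map_mul, map_pow, twRep_A, twRep_C,
        Module.End.mul_apply]
      rw [twA_pow, twC_pow m b hm0 hm1, mul_one]
      have : (-((l + 1 : ℕ) : ℤ)).toNat = 0 := by omega
      rw [this, pow_zero, Module.End.one_apply]
    · simp only [Function.comp, basisFam, twIdx, hev, map_mul, map_pow, twRep_B, twRep_C,
        Module.End.mul_apply]
      rw [twC_pow m b hm0 hm1, twB_pow, mul_one, neg_neg, Int.toNat_natCast]
    · simp only [Function.comp, basisFam, twIdx, hev, map_pow, twRep_C]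
      rw [twC_pow m b hm0 hm1, mul_one]
      simp
  · set W := Submodule.span F (Set.range (basisFam F m b)) with hWdef
    have hC0 : ∀ k, genC F m b ^ k ∈ W := fun k =>
      Submodule.subset_span ⟨.inr (.inr k), rfl⟩
    have hA : ∀ k l, genC F m b ^ k * genA F m b ^ l ∈ W := by
      intro k l
      cases l with
      | zero => simpa using hC0 k
      | succ l => exact Submodule.subset_span ⟨.inl (k, l), rfl⟩
    have hB : ∀ l k, genB F m b ^ l * genC F m b ^ k ∈ W := by
      intro l k
      cases l with
      | zero => simpa using hC0 k
      | succ l => exact Submodule.subset_span ⟨.inr (.inl (k, l)), rfl⟩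
    obtain ⟨h1, h2⟩ := tw_span m b hm0 hm1 (genA F m b) (genB F m b) (genC F m b)
      (tw_rel F m b) rfl W hA hB (by
        intro p pA pB padd psmul x hx
        induction hx using Submodule.span_induction with
        | mem x hx =>
          obtain ⟨i, rfl⟩ := hx
          rcases i with ⟨k, l⟩ | ⟨k, l⟩ | k
          · exact pA _ _
          · exact pB _ _
          · simpa [basisFam] using pB 0 k
        | zero => simpa using psmul 0 _ (pA 0 0)
        | add x y _ _ hx hy => exact padd _ _ hx hy
        | smul c x _ hx => exact psmul _ _ hx)
    exact tw_top F m b W (by simpa using hC0 0) h1 h2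
end
end

section
/- For all integers k, l, x, y ≥ 1, the relation [B^l C^k, B^y C^x] = (m^{ky} − m^{lx})·B^{l+y} C^{k+x} holds in R. -/
noncomputable section

open FreeAlgebra

theorem twist_AB (F : Type*) [Field F] (m b : F) :
    genA F m b * genB F m b = m • (genB F m b * genA F m b) + b • (1 : TwistAlg F m b) := by
  have h := RingQuot.mkAlgHom_rel F (s := twistRel F m b) (x := ι F 0 * ι F 1)
    (y := m • (ι F 1 * ι F 0) + algebraMap F (FreeAlgebra F (Fin 2)) b) ⟨rfl, rfl⟩
  rw [map_mul, map_add, map_smul, map_mul, AlgHom.commutes, Algebra.algebraMap_eq_smul_one] at h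
  exact h

theorem twist_pow {F R : Type*} [Field F] [Ring R] [Algebra F R] (m : F) (B C : R)
    (h : C * B = m • (B * C)) (k y : ℕ) :
    C ^ k * B ^ y = m ^ (k * y) • (B ^ y * C ^ k) := by
  have h1 : ∀ k : ℕ, C ^ k * B = m ^ k • (B * C ^ k) := by
    intro k
    induction k with
    | zero => simp
    | succ k ih =>
      rw [pow_succ, mul_assoc, h, mul_smul_comm, ← mul_assoc, ih, smul_mul_assoc, smul_smul,
        mul_assoc, pow_succ m, mul_comm m]
  induction y with
  | zero => simp
  | succ y ih =>
    rw [pow_succ, ← mul_assoc, ih, smul_mul_assoc, mul_assoc, h1, mul_smul_comm, smul_smul,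
      ← mul_assoc, ← pow_add, mul_add, mul_one]

theorem twist_comm {F R : Type*} [Field F] [Ring R] [Algebra F R] (m b : F) (A B : R)
    (h : A * B = m • (B * A) + b • (1 : R)) :
    (A * B - B * A) * B = m • (B * (A * B - B * A)) := by
  have h2 : A * B * B = m • (B * A * B) + b • B := by
    rw [h, add_mul, smul_mul_assoc, smul_mul_assoc, one_mul]
  have h3 : B * A * B = m • (B * B * A) + b • B := by
    rw [mul_assoc, h, mul_add, mul_smul_comm, mul_smul_comm, mul_one, ← mul_assoc]
  rw [sub_mul, mul_sub, smul_sub, ← mul_assoc, ← mul_assoc, h2]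
  have h4 : m • (B * B * A) = B * A * B - b • B := by rw [h3]; abel
  rw [h4]; abel

theorem twist_bracket {F R : Type*} [Field F] [Ring R] [Algebra F R] (m : F) (B C : R)
    (h : C * B = m • (B * C)) (k l x y : ℕ) :
    ⁅B ^ l * C ^ k, B ^ y * C ^ x⁆ = (m ^ (k * y) - m ^ (l * x)) • (B ^ (l + y) * C ^ (k + x)) := by
  have key : ∀ k l x y : ℕ, B ^ l * C ^ k * (B ^ y * C ^ x)
      = m ^ (k * y) • (B ^ (l + y) * C ^ (k + x)) := by
    intro k l x y
    rw [mul_assoc, ← mul_assoc (C ^ k), twist_pow m B C h, smul_mul_assoc, mul_smul_comm,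
      pow_add, pow_add]
    simp only [mul_assoc]
  rw [Ring.lie_def, key, key, sub_smul, add_comm y l, add_comm x k, mul_comm x l]

theorem stmt12 (F : Type*) [Field F] (m b : F) (hm0 : m ≠ 0) (hm1 : m ≠ 1)
    (k l x y : ℕ) (hk : 1 ≤ k) (hl : 1 ≤ l) (hx : 1 ≤ x) (hy : 1 ≤ y) :
    ⁅genB F m b ^ l * genC F m b ^ k, genB F m b ^ y * genC F m b ^ x⁆ =
      (m ^ (k * y) - m ^ (l * x)) • (genB F m b ^ (l + y) * genC F m b ^ (k + x)) := by
  exact twist_bracket m _ _ (twist_comm m b _ _ (twist_AB F m b)) k l x y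
end
end
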